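/- arXiv:1811.09274 — 4 statements merged into one kernel-verified Lean document; each statement's English description precedes it below -/
import Mathlib

section
/- Let n ≥ 1 and p = 2n+1. Suppose differentiable functions w_0,…,w_{p−1} : ℂ → ℂ and constants a_0,…,a_{p−1} ∈ ℂ (indices taken mod p) satisfy the p-cyclic dressing chain equations (w_i + w_{i+1})′(z) + w_{i+1}(z)² − w_i(z)² = a_i for all z ∈ ℂ and all i, set Δ := −(a_0 + ⋯ + a_{p−1}) and assume Δ ≠ 0 and that ∑_{i=0}^{p−1} w_i(z) = −(Δ/2)·z for all z ∈ ℂ. Let c ∈ ℂ satisfy c² = −1/Δ and define f_i(z) := c·(w_i(cz) + w_{i+1}(cz)) and α_i := c²·a_i. Then for every i and every z ∈ ℂ: f_i′(z) + f_i(z)·(∑_{j=1}^n f_{i+2j−1}(z) − ∑_{j=1}^n f_{i+2j}(z)) = α_i; moreover ∑_{i=0}^{2n} f_i(z) = z for all z and ∑_{i=0}^{2n} α_i = 1. -/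
/-!
Adding consecutive terms, `f i = w i + w (i + 1)`, makes the Noumi–Yamada coupling telescope: the
sum of the `f (i + k)`, `k = 1, …, 2n`, with alternating signs is `w (i + 1) - w (i + 2n + 1)`,
which equals `w (i + 1) - w i` by periodicity. Hence `f i` times its coupling is
`w (i + 1) ^ 2 - w i ^ 2`, and the dressing chain is the Noumi–Yamada system up to scaling.
-/

section CyclicSums

open Finset

variable {A : Type*}

/-- The sums `u i + u (i + 1)` of cyclically consecutive terms, which pass from the unknowns of the
dressing chain to those of the Noumi–Yamada system. -/
def cyclicPairSum [Add A] {m : ℕ} (u : ZMod m → A) (i : ZMod m) : A :=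
  u i + u (i + 1)

/-- The factor `∑_{j=1}^n g_{i+2j-1} - ∑_{j=1}^n g_{i+2j}` multiplying `g_i` in the
`A_{2n}`-Painlevé system. The summation index is shifted to start at `0`. -/
def noumiYamadaCoupling [AddCommGroup A] {n : ℕ} (g : ZMod (2 * n + 1) → A)
    (i : ZMod (2 * n + 1)) : A :=
  ∑ j ∈ range n, g (i + ((2 * j + 1 : ℕ) : ZMod (2 * n + 1))) -
    ∑ j ∈ range n, g (i + ((2 * j + 2 : ℕ) : ZMod (2 * n + 1)))

theorem sum_range_pair_sub_sum_range_pair_succ [AddCommGroup A] (v : ℕ → A) (m : ℕ) :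
    ∑ j ∈ range m, (v (2 * j + 1) + v (2 * j + 2)) -
      ∑ j ∈ range m, (v (2 * j + 2) + v (2 * j + 3)) = v 1 - v (2 * m + 1) := by
  rw [← sum_sub_distrib, ← sum_range_sub' (fun j => v (2 * j + 1))]
  refine sum_congr rfl fun j _ => ?_
  rw [show 2 * (j + 1) + 1 = 2 * j + 3 by ring]
  abel

theorem noumiYamadaCoupling_cyclicPairSum [AddCommGroup A] {n : ℕ} (u : ZMod (2 * n + 1) → A)
    (i : ZMod (2 * n + 1)) :
    noumiYamadaCoupling (cyclicPairSum u) i = u (i + 1) - u i := by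
  have telescope :=
    sum_range_pair_sub_sum_range_pair_succ (fun k : ℕ => u (i + (k : ZMod (2 * n + 1)))) n
  have pair (k : ℕ) : cyclicPairSum u (i + (k : ZMod (2 * n + 1))) =
      u (i + (k : ZMod (2 * n + 1))) + u (i + ((k + 1 : ℕ) : ZMod (2 * n + 1))) := by
    rw [cyclicPairSum, Nat.cast_succ, add_assoc]
  rw [ZMod.natCast_self, add_zero, Nat.cast_one] at telescope
  simpa only [noumiYamadaCoupling, pair] using telescope

theorem sum_cyclicPairSum [AddCommMonoid A] {m : ℕ} [NeZero m] (u : ZMod m → A) :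
    ∑ i, cyclicPairSum u i = 2 • ∑ i, u i := by
  have shift : ∑ i, u (i + 1) = ∑ i, u i := Equiv.sum_comp (Equiv.addRight 1) u
  simp only [cyclicPairSum, sum_add_distrib, shift, two_nsmul]

end CyclicSums

section DressingChain

open Finset

variable {𝕜 : Type*} [NontriviallyNormedField 𝕜]

/-- `w` is an `m`-cyclic Darboux dressing chain with constants `a` on the set `s`. The equation is
solved for the derivative of `w i + w (i + 1)`, so that `HasDerivAt` also asserts that this
derivative exists. -/
def IsDressingChainOn {m : ℕ} (w : ZMod m → 𝕜 → 𝕜) (a : ZMod m → 𝕜) (s : Set 𝕜) : Prop :=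
  ∀ i, ∀ z ∈ s, HasDerivAt (fun x => w i x + w (i + 1) x) (a i + w i z ^ 2 - w (i + 1) z ^ 2) z

/-- `f` solves the `A_{2n}`-Painlevé (Noumi–Yamada) system with parameters `α` on the set `s`. As
for dressing chains, `HasDerivAt` makes differentiability part of the notion. -/
def IsNoumiYamadaOn {n : ℕ} (f : ZMod (2 * n + 1) → 𝕜 → 𝕜) (α : ZMod (2 * n + 1) → 𝕜)
    (s : Set 𝕜) : Prop :=
  ∀ i, ∀ z ∈ s, HasDerivAt (f i) (α i - f i z * noumiYamadaCoupling (fun k => f k z) i) z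

/-- The functions `z ↦ c (w_i(cz) + w_{i+1}(cz))`, the candidate solution of the Noumi–Yamada
system attached to a dressing chain. -/
def rescaledPairSum {m : ℕ} (c : 𝕜) (w : ZMod m → 𝕜 → 𝕜) (i : ZMod m) (z : 𝕜) : 𝕜 :=
  c * (w i (c * z) + w (i + 1) (c * z))

theorem rescaledPairSum_eq_cyclicPairSum {m : ℕ} (c : 𝕜) (w : ZMod m → 𝕜 → 𝕜) (z : 𝕜) :
    (fun i => rescaledPairSum c w i z) = cyclicPairSum fun i => c * w i (c * z) :=
  funext fun _ => mul_add _ _ _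

theorem isDressingChainOn_of_deriv {m : ℕ} {w : ZMod m → 𝕜 → 𝕜} {a : ZMod m → 𝕜} {s : Set 𝕜}
    (hw : ∀ i, ∀ z ∈ s, DifferentiableAt 𝕜 (w i) z)
    (hchain : ∀ i, ∀ z ∈ s,
      deriv (fun z => w i z + w (i + 1) z) z + w (i + 1) z ^ 2 - w i z ^ 2 = a i) :
    IsDressingChainOn w a s := fun i z hz =>
  ((hw i z hz).fun_add (hw (i + 1) z hz)).hasDerivAt.congr_deriv <| by
    linear_combination hchain i z hz

theorem IsNoumiYamadaOn.deriv_add_mul_coupling {n : ℕ} {f : ZMod (2 * n + 1) → 𝕜 → 𝕜}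
    {α : ZMod (2 * n + 1) → 𝕜} {s : Set 𝕜} (hf : IsNoumiYamadaOn f α s) (i : ZMod (2 * n + 1))
    {z : 𝕜} (hz : z ∈ s) :
    deriv (f i) z + f i z * noumiYamadaCoupling (fun k => f k z) i = α i := by
  rw [(hf i z hz).deriv, sub_add_cancel]

theorem IsDressingChainOn.isNoumiYamadaOn_rescaledPairSum {n : ℕ}
    {w : ZMod (2 * n + 1) → 𝕜 → 𝕜} {a : ZMod (2 * n + 1) → 𝕜} {s : Set 𝕜}
    (h : IsDressingChainOn w a s) (c : 𝕜) :
    IsNoumiYamadaOn (rescaledPairSum c w) (fun i => c ^ 2 * a i) ((c * ·) ⁻¹' s) := by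
  intro i z hz
  have hscale : HasDerivAt (c * ·) c z := hasDerivAt_const_mul c
  refine (((h i (c * z) hz).comp z hscale).const_mul c).congr_deriv ?_
  rw [rescaledPairSum_eq_cyclicPairSum, noumiYamadaCoupling_cyclicPairSum, rescaledPairSum]
  ring

theorem sum_rescaledPairSum {m : ℕ} [NeZero m] (c : 𝕜) (w : ZMod m → 𝕜 → 𝕜) (z : 𝕜) :
    ∑ i, rescaledPairSum c w i z = 2 * c * ∑ i, w i (c * z) := by
  rw [rescaledPairSum_eq_cyclicPairSum, sum_cyclicPairSum, ← mul_sum, nsmul_eq_mul, Nat.cast_ofNat,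
    mul_assoc]

theorem dressing_chain_to_A2n_painleve_general [NeZero (2 : 𝕜)] {n : ℕ}
    {w : ZMod (2 * n + 1) → 𝕜 → 𝕜} {a : ZMod (2 * n + 1) → 𝕜} {s : Set 𝕜}
    (h : IsDressingChainOn w a s) {Δ : 𝕜} (hΔdef : Δ = -∑ i, a i) (hΔ : Δ ≠ 0)
    (hsum : ∀ z ∈ s, ∑ i, w i z = -(Δ / 2) * z) {c : 𝕜} (hc : c ^ 2 = -1 / Δ) :
    IsNoumiYamadaOn (rescaledPairSum c w) (fun i => c ^ 2 * a i) ((c * ·) ⁻¹' s) ∧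
      (∀ z, c * z ∈ s → ∑ i, rescaledPairSum c w i z = z) ∧ ∑ i, c ^ 2 * a i = 1 := by
  have hcΔ : c ^ 2 * Δ = -1 := (eq_div_iff hΔ).mp hc
  refine ⟨h.isNoumiYamadaOn_rescaledPairSum c, fun z hz => ?_, ?_⟩
  · calc ∑ i, rescaledPairSum c w i z
        = 2 * c * (-(Δ / 2) * (c * z)) := by rw [sum_rescaledPairSum, hsum _ hz]
      _ = -(c ^ 2 * Δ) * z := by field_simp
      _ = z := by rw [hcΔ, neg_neg, one_mul]
  · rw [← mul_sum, ← neg_eq_iff_eq_neg.mpr hΔdef, mul_neg, hcΔ, neg_neg]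

end DressingChain

/-- A `(2n+1)`-cyclic Darboux dressing chain with shift `Δ ≠ 0`,
after the rescaling `f_i(z) = c (w_i(cz) + w_{i+1}(cz))`, `α_i = c² a_i` with
`c² = -1/Δ`, yields a solution of the `A_{2n}`-Painlevé system with the
normalization `∑ f_i(z) = z`, `∑ α_i = 1`. -/
theorem dressing_chain_to_A2n_painleve (n : ℕ) (hn : 1 ≤ n)
    (w : ZMod (2 * n + 1) → ℂ → ℂ) (a : ZMod (2 * n + 1) → ℂ)
    (hw : ∀ i, Differentiable ℂ (w i))
    (hchain : ∀ i, ∀ z : ℂ,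
      deriv (fun z => w i z + w (i + 1) z) z + (w (i + 1) z) ^ 2 - (w i z) ^ 2 = a i)
    (Δ : ℂ) (hΔdef : Δ = -∑ i, a i) (hΔ : Δ ≠ 0)
    (hsum : ∀ z : ℂ, ∑ i, w i z = -(Δ / 2) * z)
    (c : ℂ) (hc : c ^ 2 = -1 / Δ)
    (f : ZMod (2 * n + 1) → ℂ → ℂ)
    (hf : ∀ i, f i = fun z => c * (w i (c * z) + w (i + 1) (c * z)))
    (α : ZMod (2 * n + 1) → ℂ) (hα : ∀ i, α i = c ^ 2 * a i) :
    (∀ i, ∀ z : ℂ,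
      deriv (f i) z + f i z *
        ((∑ j ∈ Finset.range n, f (i + ((2 * j + 1 : ℕ) : ZMod (2 * n + 1))) z) -
         (∑ j ∈ Finset.range n, f (i + ((2 * j + 2 : ℕ) : ZMod (2 * n + 1))) z)) = α i)
    ∧ (∀ z : ℂ, ∑ i, f i z = z)
    ∧ (∑ i, α i = 1) := by
  obtain rfl : f = rescaledPairSum c w := funext hf
  obtain rfl : α = fun i => c ^ 2 * a i := funext hα
  have hchainOn : IsDressingChainOn w a Set.univ :=
    isDressingChainOn_of_deriv (fun i z _ => hw i z) fun i z _ => hchain i z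
  obtain ⟨hNY, hsum_f, hsum_α⟩ :=
    dressing_chain_to_A2n_painleve_general hchainOn hΔdef hΔ (fun z _ => hsum z) hc
  exact ⟨fun i z => hNY.deriv_add_mul_coupling i trivial, fun z => hsum_f z trivial, hsum_α⟩
end

section
/- Let n ≥ 1 and p = 2n+1. Suppose differentiable functions w_0,…,w_{p−1} : ℂ → ℂ and constants a_0,…,a_{p−1} ∈ ℂ (indices taken mod p) satisfy the p-cyclic dressing chain equations (w_i + w_{i+1})′(z) + w_{i+1}(z)² − w_i(z)² = a_i for all z ∈ ℂ and all i. Define f_i := w_i + w_{i+1} (indices mod p). Then for every i and every z ∈ ℂ: f_i′(z) + f_i(z)·(∑_{j=1}^n f_{i+2j−1}(z) − ∑_{j=1}^n f_{i+2j}(z)) = a_i. -/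
/-!
The differences `f_{i+2j+1} - f_{i+2j+2} = w_{i+2j+1} - w_{i+2j+3}` telescope, and the odd period
`2n + 1` brings the last term back to `w_i`. The alternating sum in the Painlevé system is therefore
`w_{i+1} - w_i`, and multiplying it by `f_i = w_i + w_{i+1}` gives the quadratic part
`w_{i+1}² - w_i²` of the dressing chain.
-/

section AlternatingSum

/-- The sum `∑_{j=1}^n f_{i+2j-1} - ∑_{j=1}^n f_{i+2j}` that multiplies `f_i` in the
`A_{2n}`-Painlevé system. The summation index is shifted to start at `0`, and the indices of `f`
may lie in any additive monoid with one, so that the sum can be computed before periodicity is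
imposed. -/
def alternatingSum {ι M : Type*} [AddMonoidWithOne ι] [AddCommGroup M]
    (n : ℕ) (f : ι → M) (i : ι) : M :=
  (∑ j ∈ Finset.range n, f (i + (2 * j + 1 : ℕ))) -
    ∑ j ∈ Finset.range n, f (i + (2 * j + 2 : ℕ))

variable {ι M : Type*} [AddMonoidWithOne ι] [AddCommGroup M]

theorem alternatingSum_add_succ (n : ℕ) (w : ι → M) (i : ι) :
    alternatingSum n (fun k => w k + w (k + 1)) i = w (i + 1) - w (i + (2 * n + 1 : ℕ)) := by
  have cast_add_one (m : ℕ) : i + (m : ι) + 1 = i + (m + 1 : ℕ) := by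
    rw [Nat.cast_succ, add_assoc]
  calc alternatingSum n (fun k => w k + w (k + 1)) i
      = ∑ j ∈ Finset.range n,
          (w (i + (2 * j + 1 : ℕ)) - w (i + (2 * (j + 1) + 1 : ℕ))) := by
        simp only [alternatingSum, cast_add_one, ← Finset.sum_sub_distrib]
        exact Finset.sum_congr rfl fun j _ => by
          rw [mul_add_one, add_comm, add_sub_add_left_eq_sub]
    _ = w (i + 1) - w (i + (2 * n + 1 : ℕ)) := by
        rw [Finset.sum_range_sub' fun j => w (i + (2 * j + 1 : ℕ)), mul_zero, zero_add,
          Nat.cast_one]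

theorem alternatingSum_add_succ_of_odd_period (n : ℕ) (w : ZMod (2 * n + 1) → M)
    (i : ZMod (2 * n + 1)) :
    alternatingSum n (fun k => w k + w (k + 1)) i = w (i + 1) - w i := by
  rw [alternatingSum_add_succ, ZMod.natCast_self, add_zero]

theorem add_succ_mul_alternatingSum {R : Type*} [CommRing R] (n : ℕ)
    (w : ZMod (2 * n + 1) → R) (i : ZMod (2 * n + 1)) :
    (w i + w (i + 1)) * alternatingSum n (fun k => w k + w (k + 1)) i =
      w (i + 1) ^ 2 - w i ^ 2 := by
  rw [alternatingSum_add_succ_of_odd_period, sq_sub_sq, add_comm (w i)]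

end AlternatingSum

section DifferentialSystems

variable {𝕜 A : Type*} [NontriviallyNormedField 𝕜] [NormedCommRing A] [NormedAlgebra 𝕜 A]

/-- The functions `w_i` form a `p`-cyclic Darboux dressing chain on `s` with constants `a_i`.
The domain `s` leaves room for solutions with poles; the shift `-∑ a_i` is determined by `a` and is
not recorded. Indices live in `ZMod p`, so `p = 0` encodes the chain without periodicity,
indexed by `ℤ`. -/
structure IsDressingChainOn_s1 {p : ℕ} (w : ZMod p → 𝕜 → A) (a : ZMod p → A) (s : Set 𝕜) : Prop where
  differentiableAt : ∀ i, ∀ z ∈ s, DifferentiableAt 𝕜 (w i) z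
  deriv_add_sq_sub_sq : ∀ i, ∀ z ∈ s,
    deriv (fun z => w i z + w (i + 1) z) z + w (i + 1) z ^ 2 - w i z ^ 2 = a i

/-- The functions `f_i` solve the `A_{2n}`-Painlevé (Noumi–Yamada) system on `s` with parameters
`α_i`. -/
structure IsPainleveSolutionOn (n : ℕ) (f : ZMod (2 * n + 1) → 𝕜 → A)
    (α : ZMod (2 * n + 1) → A) (s : Set 𝕜) : Prop where
  differentiableAt : ∀ i, ∀ z ∈ s, DifferentiableAt 𝕜 (f i) z
  deriv_add_mul_alternatingSum : ∀ i, ∀ z ∈ s,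
    deriv (f i) z + f i z * alternatingSum n (fun k => f k z) i = α i

theorem dressing_chain_gives_painleve_equations_general {n : ℕ}
    {w : ZMod (2 * n + 1) → 𝕜 → A} {a : ZMod (2 * n + 1) → A} {s : Set 𝕜}
    (hw : IsDressingChainOn_s1 w a s) :
    IsPainleveSolutionOn n (fun i z => w i z + w (i + 1) z) a s where
  differentiableAt i z hz :=
    (hw.differentiableAt i z hz).fun_add (hw.differentiableAt (i + 1) z hz)
  deriv_add_mul_alternatingSum i z hz := by
    rw [add_succ_mul_alternatingSum n (fun k => w k z), ← add_sub_assoc]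
    exact hw.deriv_add_sq_sub_sq i z hz

end DifferentialSystems

/-- If `w_0, …, w_{2n}` satisfy the `(2n+1)`-cyclic dressing chain
equations with constants `a_i`, then `f_i := w_i + w_{i+1}` satisfies the
`A_{2n}`-Painlevé equations with parameters `a_i`. -/
theorem dressing_chain_gives_painleve_equations (n : ℕ) (hn : 1 ≤ n)
    (w : ZMod (2 * n + 1) → ℂ → ℂ) (a : ZMod (2 * n + 1) → ℂ)
    (hw : ∀ i, Differentiable ℂ (w i))
    (hchain : ∀ i, ∀ z : ℂ,
      deriv (fun z => w i z + w (i + 1) z) z + (w (i + 1) z) ^ 2 - (w i z) ^ 2 = a i)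
    (f : ZMod (2 * n + 1) → ℂ → ℂ)
    (hf : ∀ i, f i = fun z => w i z + w (i + 1) z) :
    ∀ i, ∀ z : ℂ,
      deriv (f i) z + f i z *
        ((∑ j ∈ Finset.range n, f (i + ((2 * j + 1 : ℕ) : ZMod (2 * n + 1))) z) -
         (∑ j ∈ Finset.range n, f (i + ((2 * j + 2 : ℕ) : ZMod (2 * n + 1))) z)) = a i := by
  obtain rfl : f = fun i z => w i z + w (i + 1) z := funext hf
  have chain : IsDressingChainOn_s1 w a Set.univ := ⟨fun i z _ => hw i z, fun i z _ => hchain i z⟩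
  have painleve := dressing_chain_gives_painleve_equations_general chain
  exact fun i z => painleve.deriv_add_mul_alternatingSum i z (Set.mem_univ z)
end

section
/- For every finite set β ⊆ ℤ, Ξ(β) is a Maya diagram if and only if β has odd cardinality; moreover every Maya diagram M has a unique representation M = Ξ(β) with β ⊆ ℤ finite, and this unique β has odd cardinality 2g+1 (g is called the genus of M and β its block coordinates). -/
/-- A Maya diagram: a set of integers containing finitely many nonnegative
integers and excluding finitely many negative integers. -/
def IsMaya (M : Set ℤ) : Prop :=
  {m : ℤ | m ∈ M ∧ 0 ≤ m}.Finite ∧ {m : ℤ | m < 0 ∧ m ∉ M}.Finite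

/-- `Ξ(β)`: the set of integers `m` such that the number of elements of `β`
exceeding `m` is odd.  For `β = {β₀ < β₁ < ⋯ < β_{2g}}` this is
`(-∞,β₀) ∪ [β₁,β₂) ∪ ⋯ ∪ [β_{2g-1},β_{2g})`. -/
def Xi (β : Finset ℤ) : Set ℤ := {m : ℤ | Odd (β.filter (fun b => m < b)).card}

/-!
Passing from `b` to `b - 1` changes the number of elements of `β` above by one exactly when `b ∈ β`,
so `β` is recovered from `Ξ(β)` as the set of `b` for which just one of `b - 1`, `b` is a member.
For a Maya diagram `M` the set of all such `b` is finite, and it determines `M` because `M`, like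
every `Ξ(β)`, contains no large integers. Far to the left all of `β` is counted, so membership in
`Ξ(β)` is decided there by the parity of the cardinality of `β`.
-/

open Filter

theorem card_filter_le_eq_card_filter_lt_add {α : Type*} [PartialOrder α] [DecidableEq α]
    [DecidableLE α] [DecidableLT α] (s : Finset α) (a : α) :
    (s.filter (a ≤ ·)).card = (s.filter (a < ·)).card + if a ∈ s then 1 else 0 := by
  have hsplit : s.filter (a ≤ ·) = s.filter (a < ·) ∪ s.filter (a = ·) := by
    simp only [le_iff_lt_or_eq, Finset.filter_or]
  have hdisj : Disjoint (s.filter (a < ·)) (s.filter (a = ·)) :=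
    Finset.disjoint_filter.2 fun _ _ hlt heq => hlt.ne heq
  rw [hsplit, Finset.card_union_of_disjoint hdisj, Finset.filter_eq]
  split_ifs <;> rfl

theorem finite_int_iff_eventually_notMem {s : Set ℤ} :
    s.Finite ↔ (∀ᶠ m in atBot, m ∉ s) ∧ ∀ᶠ m in atTop, m ∉ s := by
  simp only [← eventually_sup, ← Int.cofinite_eq, eventually_cofinite, not_not, Set.ofPred_mem_eq]

theorem isMaya_iff_eventually {M : Set ℤ} :
    IsMaya M ↔ (∀ᶠ m in atBot, m ∈ M) ∧ ∀ᶠ m in atTop, m ∉ M := by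
  have hneg : ∀ᶠ m : ℤ in atBot, m < 0 := eventually_lt_atBot 0
  have hnonneg : ∀ᶠ m : ℤ in atTop, 0 ≤ m := eventually_ge_atTop 0
  have right : {m : ℤ | m ∈ M ∧ 0 ≤ m}.Finite ↔ ∀ᶠ m in atTop, m ∉ M := by
    rw [finite_int_iff_eventually_notMem, and_iff_right (hneg.mono fun m hm h => h.2.not_gt hm)]
    exact eventually_congr (hnonneg.mono fun m hm => not_congr (and_iff_left hm))
  have left : {m : ℤ | m < 0 ∧ m ∉ M}.Finite ↔ ∀ᶠ m in atBot, m ∈ M := by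
    rw [finite_int_iff_eventually_notMem, and_iff_left (hnonneg.mono fun m hm h => h.1.not_ge hm)]
    exact eventually_congr (hneg.mono fun m hm => by simp [hm])
  rw [IsMaya, right, left, and_comm]

/-- The block coordinates of a set of integers: the left endpoints of its blocks together with the
right endpoints, each block `[a, b)` being taken half-open. They are defined for arbitrary sets, so
they form a `Set` that need not be finite. -/
def blockCoordinates (M : Set ℤ) : Set ℤ := {b : ℤ | ¬ (b - 1 ∈ M ↔ b ∈ M)}

theorem mem_blockCoordinates {M : Set ℤ} {b : ℤ} :
    b ∈ blockCoordinates M ↔ ¬ (b - 1 ∈ M ↔ b ∈ M) := Iff.rfl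

theorem eq_of_blockCoordinates_eq {M N : Set ℤ} (h : blockCoordinates M = blockCoordinates N)
    {c : ℤ} (hc : c ∈ M ↔ c ∈ N) : M = N := by
  have step (b : ℤ) : (b - 1 ∈ M ↔ b - 1 ∈ N) ↔ (b ∈ M ↔ b ∈ N) := by
    have hb : b ∈ blockCoordinates M ↔ b ∈ blockCoordinates N := by rw [h]
    rw [mem_blockCoordinates, mem_blockCoordinates] at hb
    tauto
  ext m
  induction m using Int.inductionOn' (b := c) with
  | zero => exact hc
  | succ k _ ih => exact (step (k + 1)).1 (by rwa [add_sub_cancel_right])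
  | pred k _ ih => exact (step k).2 ih

theorem IsMaya.finite_blockCoordinates {M : Set ℤ} (hM : IsMaya M) :
    (blockCoordinates M).Finite := by
  obtain ⟨hBot, hTop⟩ := isMaya_iff_eventually.1 hM
  have hBot' : ∀ᶠ b in atBot, b - 1 ∈ M :=
    (tendsto_atBot_add_const_right atBot (-1) tendsto_id).eventually hBot
  have hTop' : ∀ᶠ b in atTop, b - 1 ∉ M :=
    (tendsto_atTop_add_const_right atTop (-1) tendsto_id).eventually hTop
  refine finite_int_iff_eventually_notMem.2 ⟨?_, ?_⟩
  · filter_upwards [hBot, hBot'] with b hb hb' hcoord using hcoord (iff_of_true hb' hb)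
  · filter_upwards [hTop, hTop'] with b hb hb' hcoord using hcoord (iff_of_false hb' hb)

theorem mem_Xi {β : Finset ℤ} {m : ℤ} : m ∈ Xi β ↔ Odd (β.filter (m < ·)).card := Iff.rfl

theorem blockCoordinates_Xi (β : Finset ℤ) : blockCoordinates (Xi β) = β := by
  ext b
  have hcard := card_filter_le_eq_card_filter_lt_add β b
  rw [mem_blockCoordinates, mem_Xi, mem_Xi, Finset.mem_coe]
  simp only [Int.sub_one_lt_iff, hcard]
  split_ifs with hb
  · simp only [hb, Nat.odd_add_one, iff_true]
    exact not_iff_self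
  · simp only [hb, add_zero, not_true_eq_false]

theorem Xi_injective : Function.Injective Xi := fun β γ h =>
  Finset.coe_injective <| by rw [← blockCoordinates_Xi β, h, blockCoordinates_Xi γ]

theorem eventually_atTop_notMem_Xi (β : Finset ℤ) : ∀ᶠ m in atTop, m ∉ Xi β := by
  have habove : ∀ᶠ m in atTop, ∀ b ∈ β, b ≤ m :=
    (eventually_all_finset β).2 fun b _ => eventually_ge_atTop b
  filter_upwards [habove] with m hm
  have hempty : β.filter (m < ·) = ∅ := Finset.filter_false_of_mem fun b hb => (hm b hb).not_gt
  simp [mem_Xi, hempty]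

theorem eventually_atBot_mem_Xi_iff (β : Finset ℤ) :
    ∀ᶠ m in atBot, m ∈ Xi β ↔ Odd β.card := by
  have hbelow : ∀ᶠ m in atBot, ∀ b ∈ β, m < b :=
    (eventually_all_finset β).2 fun b _ => eventually_lt_atBot b
  filter_upwards [hbelow] with m hm
  rw [mem_Xi, Finset.filter_true_of_mem hm]

theorem isMaya_Xi_iff (β : Finset ℤ) : IsMaya (Xi β) ↔ Odd β.card := by
  rw [isMaya_iff_eventually, and_iff_left (eventually_atTop_notMem_Xi β),
    eventually_congr (eventually_atBot_mem_Xi_iff β), eventually_const]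

theorem IsMaya.Xi_toFinset_blockCoordinates {M : Set ℤ} (hM : IsMaya M) :
    Xi hM.finite_blockCoordinates.toFinset = M := by
  have hcoords : blockCoordinates (Xi hM.finite_blockCoordinates.toFinset) =
      blockCoordinates M := by
    rw [blockCoordinates_Xi, Set.Finite.coe_toFinset]
  obtain ⟨c, hcXi, hcM⟩ :=
    ((eventually_atTop_notMem_Xi _).and (isMaya_iff_eventually.1 hM).2).exists
  exact eq_of_blockCoordinates_eq hcoords (iff_of_false hcXi hcM)

/-- `Ξ(β)` is a Maya diagram iff `β` has odd cardinality; moreover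
every Maya diagram `M` is `Ξ(β)` for a unique finite `β`, and the unique such
`β` has odd cardinality `2g+1`. -/
theorem maya_block_coordinates :
    (∀ β : Finset ℤ, IsMaya (Xi β) ↔ Odd β.card) ∧
    (∀ M : Set ℤ, IsMaya M → ∃! β : Finset ℤ, Xi β = M) ∧
    (∀ M : Set ℤ, IsMaya M → ∀ β : Finset ℤ, Xi β = M → ∃ g : ℕ, β.card = 2 * g + 1) := by
  refine ⟨isMaya_Xi_iff, fun M hM => ?_, fun M hM β hβ => ?_⟩
  · exact ⟨_, hM.Xi_toFinset_blockCoordinates, fun γ hγ =>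
      Xi_injective (hγ.trans hM.Xi_toFinset_blockCoordinates.symm)⟩
  · exact (isMaya_Xi_iff β).1 (hβ ▸ hM)
end

section
/- Let k ≥ 1 and let M be a Maya diagram with k-modular decomposition (M^(0),…,M^(k−1)); each M^(i) is then a Maya diagram, and let g_i ≥ 0 be such that the symmetric difference M^(i) Δ (M^(i)+1) has cardinality 2·g_i + 1 (g_i is the genus of M^(i)). Then M is (p,k)-cyclic with p = ∑_{i=0}^{k−1} (2·g_i + 1); precisely, the symmetric difference M Δ (M + k) is finite of cardinality ∑_{i=0}^{k−1} (2·g_i + 1). -/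
/-- The translate `M + t = {m + t : m ∈ M}`. -/
def shiftSet (M : Set ℤ) (t : ℤ) : Set ℤ := (fun m => m + t) '' M

/-- The interlacing `Θ(M⁽⁰⁾, …, M⁽ᵏ⁻¹⁾) = ⋃ᵢ (k·M⁽ⁱ⁾ + i)`. -/
def interlace (k : ℕ) (Ms : Fin k → Set ℤ) : Set ℤ :=
  ⋃ i : Fin k, {n : ℤ | ∃ m ∈ Ms i, n = (k : ℤ) * m + (i.val : ℤ)}

/-- The `i`-th component of the `k`-modular decomposition of `M`. -/
def modDecomp (k : ℕ) (M : Set ℤ) (i : Fin k) : Set ℤ :=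
  {m : ℤ | (k : ℤ) * m + (i.val : ℤ) ∈ M}

/-!
Division with remainder `n = k * m + i` identifies a set of integers with the disjoint union of its
`k` components. It turns translation by `k` into translation by `1` in every component, so
`M ∆ (M + k)` has components `M⁽ⁱ⁾ ∆ (M⁽ⁱ⁾ + 1)`. Since the sign of `n` is that of `m`, the two
finiteness conditions defining a Maya diagram can also be checked componentwise.
-/

theorem mem_shiftSet {M : Set ℤ} {t n : ℤ} : n ∈ shiftSet M t ↔ n - t ∈ M := by
  simp only [shiftSet, Set.image_add_right, Set.mem_preimage, sub_eq_add_neg]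

section ModDecomp

variable {k : ℕ}

theorem mem_modDecomp {M : Set ℤ} {i : Fin k} {m : ℤ} :
    m ∈ modDecomp k M i ↔ (k : ℤ) * m + (i.val : ℤ) ∈ M :=
  Iff.rfl

theorem modDecomp_symmDiff (M N : Set ℤ) (i : Fin k) :
    modDecomp k (symmDiff M N) i = symmDiff (modDecomp k M i) (modDecomp k N i) :=
  rfl

theorem modDecomp_shiftSet (M : Set ℤ) (t : ℤ) (i : Fin k) :
    modDecomp k (shiftSet M (k * t)) i = shiftSet (modDecomp k M i) t := by
  ext m
  have translate_quotient : (k : ℤ) * m + i.val - k * t = k * (m - t) + i.val := by ring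
  rw [mem_modDecomp, mem_shiftSet, mem_shiftSet, mem_modDecomp, translate_quotient]

theorem modDecomp_symmDiff_shiftSet (M : Set ℤ) (t : ℤ) (i : Fin k) :
    modDecomp k (symmDiff M (shiftSet M (k * t))) i =
      symmDiff (modDecomp k M i) (shiftSet (modDecomp k M i) t) := by
  rw [modDecomp_symmDiff, modDecomp_shiftSet]

theorem natCast_mul_add_val_nonneg_iff (i : Fin k) {m : ℤ} :
    0 ≤ (k : ℤ) * m + (i.val : ℤ) ↔ 0 ≤ m := by
  have val_lt : (i.val : ℤ) < k := by exact_mod_cast i.isLt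
  constructor
  · intro h
    by_contra! hm
    nlinarith
  · intro hm
    positivity

/-- The bijection `(i, m) ↦ k * m + i` from the disjoint union of the components of the `k`-modular
decomposition of `M` onto `M`, obtained by restricting the inverse of `Int.divModEquiv`. It reduces
counting in `M` to counting in the components. -/
def sigmaModDecompEquiv (k : ℕ) [NeZero k] (M : Set ℤ) : (Σ i : Fin k, modDecomp k M i) ≃ M :=
  have mem_iff (m : ℤ) (i : Fin k) :
      m ∈ modDecomp k M i ↔ (Int.divModEquiv k).symm (m, i) ∈ M := by
    rw [mem_modDecomp, Int.divModEquiv_symm_apply, mul_comm]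
  calc (Σ i : Fin k, modDecomp k M i)
    _ ≃ {p : ℤ × Fin k // (Int.divModEquiv k).symm p ∈ M} :=
      { toFun x := ⟨(x.2, x.1), (mem_iff _ _).1 x.2.2⟩
        invFun p := ⟨p.1.2, p.1.1, (mem_iff _ _).2 p.2⟩
        left_inv _ := rfl
        right_inv _ := rfl }
    _ ≃ M := (Int.divModEquiv k).symm.subtypeEquiv fun _ => Iff.rfl

variable (k) [NeZero k]

theorem finite_iff_forall_finite_modDecomp {M : Set ℤ} :
    M.Finite ↔ ∀ i : Fin k, (modDecomp k M i).Finite := by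
  simp only [← Set.finite_coe_iff, ← (sigmaModDecompEquiv k M).finite_iff]
  constructor
  · intro _ i
    exact Finite.of_injective (Sigma.mk (β := fun i => modDecomp k M i) i) sigma_mk_injective
  · intro _
    infer_instance

theorem ncard_eq_sum_ncard_modDecomp {M : Set ℤ} (hM : M.Finite) :
    M.ncard = ∑ i : Fin k, (modDecomp k M i).ncard := by
  have (i : Fin k) : Finite (modDecomp k M i) := (finite_iff_forall_finite_modDecomp k).1 hM i
  simp only [← Nat.card_coe_set_eq]
  rw [← Nat.card_congr (sigmaModDecompEquiv k M), Nat.card_sigma]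

theorem isMaya_iff_forall_isMaya_modDecomp {M : Set ℤ} :
    IsMaya M ↔ ∀ i : Fin k, IsMaya (modDecomp k M i) := by
  have modDecomp_nonneg (i : Fin k) : modDecomp k {n | n ∈ M ∧ 0 ≤ n} i =
      {m | m ∈ modDecomp k M i ∧ 0 ≤ m} := by
    ext m
    exact and_congr_right fun _ => natCast_mul_add_val_nonneg_iff i
  have modDecomp_neg (i : Fin k) : modDecomp k {n | n < 0 ∧ n ∉ M} i =
      {m | m < 0 ∧ m ∉ modDecomp k M i} := by
    ext m
    exact and_congr_left fun _ => lt_iff_lt_of_le_iff_le (natCast_mul_add_val_nonneg_iff i)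
  rw [IsMaya, finite_iff_forall_finite_modDecomp k, finite_iff_forall_finite_modDecomp k]
  simp only [IsMaya, modDecomp_nonneg, modDecomp_neg, forall_and]

end ModDecomp

/-- if `M` is a Maya diagram with `k`-modular decomposition
`(M⁽⁰⁾,…,M⁽ᵏ⁻¹⁾)`, each of genus `gᵢ` (i.e. `#(M⁽ⁱ⁾ ∆ (M⁽ⁱ⁾+1)) = 2gᵢ+1`), then
each `M⁽ⁱ⁾` is a Maya diagram and `M` is `(p,k)`-cyclic with
`p = ∑ᵢ (2gᵢ+1) = #(M ∆ (M+k))`. -/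
theorem maya_pk_cyclic_genus (k : ℕ) (hk : 1 ≤ k) (M : Set ℤ) (hM : IsMaya M)
    (g : Fin k → ℕ)
    (hg : ∀ i, (symmDiff (modDecomp k M i) (shiftSet (modDecomp k M i) 1)).ncard
      = 2 * g i + 1) :
    (∀ i, IsMaya (modDecomp k M i)) ∧
    (symmDiff M (shiftSet M (k : ℤ))).Finite ∧
    (symmDiff M (shiftSet M (k : ℤ))).ncard = ∑ i, (2 * g i + 1) := by
  have : NeZero k := ⟨Nat.ne_of_gt hk⟩
  have component (i : Fin k) : modDecomp k (symmDiff M (shiftSet M k)) i =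
      symmDiff (modDecomp k M i) (shiftSet (modDecomp k M i) 1) := by
    simpa only [mul_one] using modDecomp_symmDiff_shiftSet M 1 i
  have component_ncard (i : Fin k) :
      (modDecomp k (symmDiff M (shiftSet M k)) i).ncard = 2 * g i + 1 := by
    rw [component, hg]
  have finite_symmDiff : (symmDiff M (shiftSet M k)).Finite :=
    (finite_iff_forall_finite_modDecomp k).2 fun i =>
      Set.finite_of_ncard_ne_zero (by simp [component_ncard])
  refine ⟨(isMaya_iff_forall_isMaya_modDecomp k).1 hM, finite_symmDiff, ?_⟩
  rw [ncard_eq_sum_ncard_modDecomp k finite_symmDiff]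
  exact Finset.sum_congr rfl fun i _ => component_ncard i
end
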